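/- For every positive integer n, 2^n · (n+1)^{n-1} = Σ_b n! · Σ_{α ⊆ V(b)} Π_{v ∈ α} 1/h(v), where the outer sum is over all unlabeled binary trees b on n vertices, α ranges over all subsets of the vertex set of b, and h(v) denotes the number of descendants of v in b (including v itself). -/

import Mathlib

/-- Unlabeled binary trees: each vertex has an (optional) left and right subtree.
`nil` is the empty tree. -/
inductive UBT : Type
  | nil : UBT
  | node : UBT → UBT → UBT
deriving DecidableEq

/-- Number of vertices of an unlabeled binary tree. -/
def UBT.size : UBT → ℕ
  | .nil => 0
  | .node l r => l.size + r.size + 1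

/-- The vertex set of an unlabeled binary tree, encoded as root-to-vertex paths
(`false` = step to the left child, `true` = step to the right child). -/
def UBT.verts : UBT → Finset (List Bool)
  | .nil => ∅
  | .node l r => insert [] ((l.verts.image (List.cons false)) ∪ (r.verts.image (List.cons true)))

/-- The descendant subtree at a given position, so for a vertex `v` of `b`,
`h(v) = ((b.sub v).size`, the number of descendants of `v` (including `v`). -/
def UBT.sub : UBT → List Bool → UBT
  | t, [] => t
  | .nil, _ => .nil
  | .node l r, b :: p => if b then r.sub p else l.sub p

/-- The (finite) set of all unlabeled binary trees on `n` vertices. -/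
def treesOfSize : ℕ → Finset UBT
  | 0 => {UBT.nil}
  | n + 1 =>
      (Finset.range (n + 1)).attach.biUnion fun i =>
        ((treesOfSize i.1) ×ˢ (treesOfSize (n - i.1))).image fun p => UBT.node p.1 p.2
decreasing_by
  all_goals (have := i.2; simp only [Finset.mem_range] at this; omega)

/-! Let `Aₙ(x) = x (x + n)ⁿ⁻¹ / n!` be the normalised Abel polynomials. Summing over the subsets
`α` turns the weight of a tree into the hook product `∏ᵥ (1 + 1 / h(v))`. Splitting off the root,
the sums `Wₙ` of these products satisfy `Wₙ₊₁ = (1 + 1 / (n + 1)) ∑ᵢ Wᵢ Wₙ₋ᵢ`. The values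
`2ⁿ Aₙ(1)` satisfy the same recurrence: the binomial theorem `∑ᵢ Aᵢ(x) Aₙ₋ᵢ(y) = Aₙ(x + y)` of Abel
collapses the convolution to `Aₙ(2)`, which differs from `Aₙ₊₁(1)` by an explicit factor. That
theorem follows by induction, both sides having the same derivative in `x` (as the derivative of
`Aₙ₊₁(x)` is `Aₙ(x + 1)`) and the same value at `x = 0`. -/

section Trees

open Finset

theorem treesOfSize_zero : treesOfSize 0 = {UBT.nil} := by
  rw [treesOfSize]

theorem treesOfSize_succ (n : ℕ) :
    treesOfSize (n + 1) = (antidiagonal n).biUnion fun p =>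
      (treesOfSize p.1 ×ˢ treesOfSize p.2).image fun q => UBT.node q.1 q.2 := by
  ext b
  rw [treesOfSize]
  simp only [mem_biUnion, mem_attach, true_and, Subtype.exists, Prod.exists,
    HasAntidiagonal.mem_antidiagonal]
  constructor
  · rintro ⟨i, hi, hb⟩
    exact ⟨i, n - i, Nat.add_sub_of_le (mem_range_succ_iff.mp hi), hb⟩
  · rintro ⟨i, j, rfl, hb⟩
    exact ⟨i, mem_range_succ_iff.mpr (Nat.le_add_right i j), by rwa [Nat.add_sub_cancel_left]⟩

theorem mem_treesOfSize {b : UBT} {n : ℕ} : b ∈ treesOfSize n ↔ b.size = n := by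
  induction b generalizing n with
  | nil => cases n <;> simp [treesOfSize_zero, treesOfSize_succ, UBT.size]
  | node l r ihl ihr => cases n <;> simp [treesOfSize_zero, treesOfSize_succ, UBT.size, ihl, ihr]

theorem sum_treesOfSize_succ {M : Type*} [AddCommMonoid M] (f : UBT → M) (n : ℕ) :
    ∑ b ∈ treesOfSize (n + 1), f b =
      ∑ p ∈ antidiagonal n, ∑ l ∈ treesOfSize p.1, ∑ r ∈ treesOfSize p.2, f (.node l r) := by
  have node_injective : Function.Injective fun q : UBT × UBT => UBT.node q.1 q.2 := by
    rintro ⟨l, r⟩ ⟨l', r'⟩ h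
    simpa using h
  have disjoint_splits : (antidiagonal n : Set (ℕ × ℕ)).PairwiseDisjoint fun p =>
      (treesOfSize p.1 ×ˢ treesOfSize p.2).image fun q => UBT.node q.1 q.2 := by
    rintro p - q - hne
    refine (disjoint_image node_injective).mpr (disjoint_left.mpr fun t htp htq => hne ?_)
    simp only [mem_product, mem_treesOfSize] at htp htq
    exact Prod.ext (htp.1.symm.trans htq.1) (htp.2.symm.trans htq.2)
  rw [treesOfSize_succ, sum_biUnion disjoint_splits]
  refine sum_congr rfl fun p _ => ?_
  rw [sum_image node_injective.injOn, sum_product]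

theorem UBT.prod_verts_node {M : Type*} [CommMonoid M] (f : List Bool → M) (l r : UBT) :
    ∏ v ∈ (UBT.node l r).verts, f v =
      f [] * ((∏ v ∈ l.verts, f (false :: v)) * ∏ v ∈ r.verts, f (true :: v)) := by
  have disjoint_sides :
      Disjoint (l.verts.image (List.cons false)) (r.verts.image (List.cons true)) := by
    simp [disjoint_left]
  rw [verts, prod_insert (by simp), prod_union disjoint_sides,
    prod_image List.cons_injective.injOn, prod_image List.cons_injective.injOn]

/-- The hook product `∏ᵥ w(h(v))` of a binary tree, for an arbitrary weight `w` on hook lengths. -/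
def UBT.hookProd {M : Type*} [CommMonoid M] (w : ℕ → M) (b : UBT) : M :=
  ∏ v ∈ b.verts, w (b.sub v).size

theorem UBT.hookProd_nil {M : Type*} [CommMonoid M] (w : ℕ → M) : UBT.nil.hookProd w = 1 := by
  simp [hookProd, verts]

theorem UBT.hookProd_node {M : Type*} [CommMonoid M] (w : ℕ → M) (l r : UBT) :
    (UBT.node l r).hookProd w = w (l.size + r.size + 1) * (l.hookProd w * r.hookProd w) := by
  simp [hookProd, prod_verts_node, sub, size]

theorem sum_hookProd_succ {R : Type*} [CommSemiring R] (w : ℕ → R) (n : ℕ) :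
    ∑ b ∈ treesOfSize (n + 1), b.hookProd w =
      w (n + 1) * ∑ p ∈ antidiagonal n,
        (∑ l ∈ treesOfSize p.1, l.hookProd w) * ∑ r ∈ treesOfSize p.2, r.hookProd w := by
  rw [sum_treesOfSize_succ, mul_sum]
  refine sum_congr rfl fun p hp => ?_
  rw [sum_mul_sum]
  simp only [mul_sum]
  refine sum_congr rfl fun l hl => sum_congr rfl fun r hr => ?_
  rw [UBT.hookProd_node, mem_treesOfSize.mp hl, mem_treesOfSize.mp hr,
    HasAntidiagonal.mem_antidiagonal.mp hp]

end Trees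

section Abel

open Finset Polynomial

theorem eq_of_derivative_eq_of_eval_zero_eq {R : Type*} [Ring R] [IsAddTorsionFree R] {p q : R[X]}
    (hderiv : derivative p = derivative q) (hzero : p.eval 0 = q.eval 0) : p = q := by
  have hconst : p - q = C ((p - q).coeff 0) :=
    eq_C_of_derivative_eq_zero (by rw [derivative_sub, hderiv, sub_self])
  rw [coeff_zero_eq_eval_zero, eval_sub, hzero, sub_self, C_0] at hconst
  exact sub_eq_zero.mp hconst

variable (K : Type*) [Field K]

/-- The normalised Abel polynomials `Aₙ(x) = x (x + n)ⁿ⁻¹ / n!`. The case `n = 0`, where the formula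
reads `x · x⁻¹`, is separate because of truncated subtraction in the exponent. -/
noncomputable def abelPoly : ℕ → K[X]
  | 0 => 1
  | n + 1 => C ((n + 1).factorial : K)⁻¹ * (X * (X + C ((n + 1 : ℕ) : K)) ^ n)

theorem abelPoly_zero : abelPoly K 0 = 1 := rfl

theorem eval_abelPoly_succ (n : ℕ) (x : K) :
    (abelPoly K (n + 1)).eval x = x * (x + (n + 1)) ^ n / (n + 1).factorial := by
  simp only [abelPoly, eval_mul, eval_C, eval_X, eval_pow, eval_add]
  push_cast
  ring

theorem eval_zero_abelPoly_succ (n : ℕ) : (abelPoly K (n + 1)).eval 0 = 0 := by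
  rw [eval_abelPoly_succ, zero_mul, zero_div]

variable [CharZero K]

theorem derivative_abelPoly_succ (n : ℕ) :
    derivative (abelPoly K (n + 1)) = taylor 1 (abelPoly K n) := by
  cases n with
  | zero => simp [abelPoly]
  | succ n =>
    have hfactorial : (C ((n + 1).factorial : K)⁻¹ : K[X]) =
        C ((n + 2).factorial : K)⁻¹ * C ((n + 2 : ℕ) : K) := by
      have : ((n + 2 : ℕ) : K) ≠ 0 := Nat.cast_ne_zero.mpr (n + 1).succ_ne_zero
      rw [← C_mul, Nat.factorial_succ (n + 1), Nat.cast_mul]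
      field_simp
    simp only [abelPoly, hfactorial, taylor_mul, taylor_pow, taylor_X, taylor_C, map_add,
      derivative_mul, derivative_pow, derivative_C, derivative_X, Nat.add_sub_cancel]
    simp only [Nat.cast_add, Nat.cast_one, Nat.cast_ofNat, map_add, map_one, map_natCast, map_ofNat]
    ring

theorem sum_antidiagonal_abelPoly_mul_C_eval (n : ℕ) (y : K) :
    ∑ p ∈ antidiagonal n, abelPoly K p.1 * C ((abelPoly K p.2).eval y) =
      taylor y (abelPoly K n) := by
  induction n with
  | zero => simp [abelPoly_zero]
  | succ n ih =>
    apply eq_of_derivative_eq_of_eval_zero_eq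
    · calc derivative (∑ p ∈ antidiagonal (n + 1), abelPoly K p.1 * C ((abelPoly K p.2).eval y))
        _ = ∑ p ∈ antidiagonal n, taylor 1 (abelPoly K p.1) * C ((abelPoly K p.2).eval y) := by
          rw [Nat.sum_antidiagonal_succ]
          simp [abelPoly_zero, derivative_abelPoly_succ, derivative_mul]
        _ = taylor 1 (taylor y (abelPoly K n)) := by
          simp only [← ih, map_sum, taylor_mul, taylor_C]
        _ = derivative (taylor y (abelPoly K (n + 1))) := by
          rw [taylor_taylor, add_comm, ← taylor_taylor, ← derivative_abelPoly_succ]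
          simp [taylor_apply, derivative_comp]
    · rw [Nat.sum_antidiagonal_succ]
      simp [abelPoly_zero, eval_zero_abelPoly_succ, eval_finsetSum, taylor_eval]

theorem sum_antidiagonal_eval_abelPoly_mul (n : ℕ) (x y : K) :
    ∑ p ∈ antidiagonal n, (abelPoly K p.1).eval x * (abelPoly K p.2).eval y =
      (abelPoly K n).eval (x + y) := by
  simpa only [eval_finsetSum, eval_mul, eval_C, taylor_eval] using
    congrArg (eval x) (sum_antidiagonal_abelPoly_mul_C_eval K n y)

theorem add_one_mul_eval_abelPoly_succ (n : ℕ) (x : K) :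
    (x + 1) * ((n + 1) * (abelPoly K (n + 1)).eval x) =
      x * ((x + n + 1) * (abelPoly K n).eval (x + 1)) := by
  cases n with
  | zero =>
    simp only [eval_abelPoly_succ, abelPoly_zero, eval_one, zero_add, Nat.factorial_one, pow_zero,
      Nat.cast_zero, Nat.cast_one]
    ring
  | succ n =>
    rw [eval_abelPoly_succ, eval_abelPoly_succ, Nat.factorial_succ (n + 1)]
    have : (n : K) + 1 + 1 ≠ 0 := by exact_mod_cast Nat.succ_ne_zero (n + 1)
    push_cast
    field_simp
    ring

end Abel

section Postnikov

open Finset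

theorem sum_hookProd_one_add_one_div (K : Type*) [Field K] [CharZero K] (n : ℕ) :
    ∑ b ∈ treesOfSize n, b.hookProd (fun k => 1 + 1 / (k : K)) =
      2 ^ n * (abelPoly K n).eval 1 := by
  induction n using Nat.strong_induction_on with
  | _ n ih =>
    cases n with
    | zero => simp [treesOfSize_zero, UBT.hookProd_nil, abelPoly_zero]
    | succ n =>
      have hconv : ∑ p ∈ antidiagonal n,
          (∑ l ∈ treesOfSize p.1, l.hookProd fun k => 1 + 1 / (k : K)) *
            ∑ r ∈ treesOfSize p.2, r.hookProd (fun k => 1 + 1 / (k : K)) =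
          2 ^ n * (abelPoly K n).eval (1 + 1) := by
        rw [← sum_antidiagonal_eval_abelPoly_mul, mul_sum]
        refine sum_congr rfl fun p hp => ?_
        have hsum : p.1 + p.2 = n := HasAntidiagonal.mem_antidiagonal.mp hp
        rw [ih p.1 (by lia), ih p.2 (by lia), ← hsum]
        ring
      have hstep := add_one_mul_eval_abelPoly_succ K n 1
      have : (n : K) + 1 ≠ 0 := n.cast_add_one_ne_zero
      rw [sum_hookProd_succ, hconv]
      push_cast
      field_simp
      linear_combination -2 ^ n * hstep

end Postnikov

/-- **Postnikov's identity, expanded form.** For every positive integer `n`,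
`2^n (n+1)^(n-1) = Σ_b n! Σ_{α ⊆ V(b)} Π_{v ∈ α} 1/h(v)`, where `b` ranges over
unlabeled binary trees on `n` vertices and `h(v)` is the number of descendants of `v`. -/
theorem postnikov_expanded (n : ℕ) (hn : 0 < n) :
    (2 ^ n * (n + 1) ^ (n - 1) : ℚ) =
      ∑ b ∈ treesOfSize n, (n.factorial : ℚ) *
        ∑ α ∈ b.verts.powerset, ∏ v ∈ α, (1 : ℚ) / ((b.sub v).size : ℚ) := by
  have sum_subsets (b : UBT) : ∑ α ∈ b.verts.powerset, ∏ v ∈ α, (1 : ℚ) / ((b.sub v).size : ℚ) =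
      b.hookProd fun k => 1 + 1 / (k : ℚ) :=
    (Finset.prod_one_add b.verts).symm
  obtain ⟨m, rfl⟩ := Nat.exists_eq_add_one.mpr hn
  simp only [sum_subsets]
  rw [← Finset.mul_sum, sum_hookProd_one_add_one_div, eval_abelPoly_succ, Nat.add_sub_cancel]
  push_cast
  field_simp
  ring
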